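/- Every closed subset F of the Cantor space is σ-homogeneous; that is, F is a countable union of subspaces that are closed in F and h-homogeneous in the subspace topology. -/

import Mathlib

/-- A topological space is *h-homogeneous* if every nonempty clopen subset,
with the subspace topology, is homeomorphic to the whole space. -/
def HHomogeneous (Y : Type*) [TopologicalSpace Y] : Prop :=
  ∀ U : Set Y, IsClopen U → U.Nonempty → Nonempty (U ≃ₜ Y)

open Set Filter Topology

namespace CantorAux

/-- `n` is a splitting level of `P` along `x`. -/
def Split (P : Set (ℕ → Bool)) (x : ℕ → Bool) (n : ℕ) : Prop :=
  ∃ y ∈ P, ∃ w ∈ P, (∀ m < n, y m = x m) ∧ (∀ m < n, w m = x m) ∧ y n ≠ w n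

lemma split_congr {P : Set (ℕ → Bool)} {x y : ℕ → Bool} {n : ℕ} (h : ∀ m < n, y m = x m) :
    Split P x n ↔ Split P y n := by
  unfold Split
  constructor
  · rintro ⟨a, ha, b, hb, h1, h2, h3⟩
    exact ⟨a, ha, b, hb, fun m hm => (h1 m hm).trans (h m hm).symm,
      fun m hm => (h2 m hm).trans (h m hm).symm, h3⟩
  · rintro ⟨a, ha, b, hb, h1, h2, h3⟩
    exact ⟨a, ha, b, hb, fun m hm => (h1 m hm).trans (h m hm),
      fun m hm => (h2 m hm).trans (h m hm), h3⟩

lemma split_infinite {P : Set (ℕ → Bool)} (hP : Preperfect P) {x : ℕ → Bool} (hx : x ∈ P) :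
    (Set.ofPred (Split P x)).Infinite := by
  rw [Set.infinite_iff_exists_gt]
  intro N
  have h := accPt_iff_nhds.1 (hP x hx) (PiNat.cylinder x (N + 1))
    ((PiNat.isOpen_cylinder _ x (N + 1)).mem_nhds (PiNat.self_mem_cylinder x (N + 1)))
  obtain ⟨y, ⟨hy, hyP⟩, hne⟩ := h
  rw [PiNat.mem_cylinder_iff] at hy
  refine ⟨PiNat.firstDiff y x, ⟨y, hyP, x, hx, fun m hm => PiNat.apply_eq_of_lt_firstDiff hm,
    fun _ _ => rfl, PiNat.apply_firstDiff_ne hne⟩, ?_⟩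
  by_contra hlt
  exact PiNat.apply_firstDiff_ne hne (hy _ (by omega))

open Classical in
lemma nth_eq {P : Set (ℕ → Bool)} {x y : ℕ → Bool} {n : ℕ} (h : ∀ m < n, y m = x m)
    (hs : Split P x n) : Nat.nth (Split P y) (Nat.count (Split P x) n) = n := by
  have hc : Nat.count (Split P x) n = Nat.count (Split P y) n := by
    rw [Nat.count_eq_card_filter_range, Nat.count_eq_card_filter_range]
    congr 1
    apply Finset.filter_congr
    intro m hm
    exact split_congr fun j hj => h j (hj.trans (Finset.mem_range.1 hm))
  rw [hc]
  exact Nat.nth_count ((split_congr h).1 hs)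

lemma nth_eq' {P : Set (ℕ → Bool)} (hP : Preperfect P) {x y : ℕ → Bool} (hx : x ∈ P) {k : ℕ}
    (h : ∀ m < Nat.nth (Split P x) k, y m = x m) :
    Nat.nth (Split P y) k = Nat.nth (Split P x) k := by
  classical
  have := nth_eq h (Nat.nth_mem_of_infinite (split_infinite hP hx) k)
  rwa [Nat.count_nth_of_infinite (split_infinite hP hx)] at this

/-- Read off the values of `x` at its splitting levels. -/
noncomputable def phi (P : Set (ℕ → Bool)) (x : P) : ℕ → Bool :=
  fun k => x.1 (Nat.nth (Split P x.1) k)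

lemma phi_continuous {P : Set (ℕ → Bool)} (hP : Preperfect P) : Continuous (phi P) := by
  refine continuous_pi fun k => ?_
  apply IsLocallyConstant.continuous
  rw [IsLocallyConstant.iff_exists_open]
  intro x
  refine ⟨Subtype.val ⁻¹' PiNat.cylinder x.1 (Nat.nth (Split P x.1) k + 1),
    (PiNat.isOpen_cylinder _ _ _).preimage continuous_subtype_val,
    PiNat.self_mem_cylinder _ _, ?_⟩
  intro y hy
  have hy' := PiNat.mem_cylinder_iff.1 hy
  unfold phi
  rw [nth_eq' hP x.2 fun m hm => hy' m (by omega)]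
  exact hy' _ (by omega)

lemma phi_injective {P : Set (ℕ → Bool)} : Function.Injective (phi P) := by
  classical
  intro x y hxy
  by_contra hne
  have hne' : y.1 ≠ x.1 := fun h => hne (Subtype.ext h.symm)
  set n := PiNat.firstDiff y.1 x.1 with hn
  have hag : ∀ m < n, y.1 m = x.1 m := fun m hm => PiNat.apply_eq_of_lt_firstDiff hm
  have hs : Split P x.1 n := ⟨y.1, y.2, x.1, x.2, hag, fun _ _ => rfl,
    PiNat.apply_firstDiff_ne hne'⟩
  have h1 := congrFun hxy (Nat.count (Split P x.1) n)
  unfold phi at h1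
  rw [nth_eq hag hs, nth_eq (fun _ _ => rfl) hs] at h1
  exact PiNat.apply_firstDiff_ne hne' h1.symm

lemma phi_dense {P : Set (ℕ → Bool)} (hP : Preperfect P) (hne : P.Nonempty) (z : ℕ → Bool)
    (k : ℕ) : ∃ x : P, ∀ j < k, phi P x j = z j := by
  induction k with
  | zero => exact ⟨⟨_, hne.some_mem⟩, by simp⟩
  | succ k ih =>
    obtain ⟨x, hx⟩ := ih
    have hinf := split_infinite hP x.2
    obtain ⟨a, ha, b, hb, h1, h2, h3⟩ := Nat.nth_mem_of_infinite hinf k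
    obtain ⟨y, hyP, hy, hyz⟩ : ∃ y ∈ P, (∀ m < Nat.nth (Split P x.1) k, y m = x.1 m) ∧
        y (Nat.nth (Split P x.1) k) = z k := by
      by_cases hz : a (Nat.nth (Split P x.1) k) = z k
      · exact ⟨a, ha, h1, hz⟩
      · refine ⟨b, hb, h2, ?_⟩
        revert h3 hz
        cases a (Nat.nth (Split P x.1) k) <;> cases b (Nat.nth (Split P x.1) k) <;>
          cases z k <;> simp
    refine ⟨⟨y, hyP⟩, fun j hj => ?_⟩
    have hmono := Nat.nth_strictMono hinf
    have hle : Nat.nth (Split P x.1) j ≤ Nat.nth (Split P x.1) k :=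
      hmono.monotone (by omega)
    have he := nth_eq' (y := y) (k := j) hP x.2 fun m hm => hy m (by omega)
    change y (Nat.nth (Split P y) j) = z j
    rw [he]
    rcases Nat.lt_succ_iff_lt_or_eq.1 hj with h | rfl
    · rw [hy _ (hmono h)]
      exact hx j h
    · exact hyz

/-- Brouwer: a nonempty perfect subset of the Cantor space is homeomorphic to it. -/
theorem brouwer {P : Set (ℕ → Bool)} (hc : IsClosed P) (hP : Preperfect P) (hne : P.Nonempty) :
    Nonempty (P ≃ₜ (ℕ → Bool)) := by
  have : CompactSpace P := isCompact_iff_compactSpace.1 hc.isCompact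
  have hcont := phi_continuous hP
  have hsurj : Function.Surjective (phi P) := by
    intro z
    choose y hy using phi_dense hP hne z
    have hcl : IsClosed (range (phi P)) := (isCompact_range hcont).isClosed
    change z ∈ range (phi P)
    refine hcl.mem_of_tendsto (f := fun k => phi P (y k)) (b := atTop) ?_
      (Eventually.of_forall fun k => mem_range_self _)
    rw [tendsto_pi_nhds]
    intro j
    refine tendsto_const_nhds.congr' ?_
    filter_upwards [eventually_gt_atTop j] with k hk
    exact (hy k j hk).symm
  exact ⟨Continuous.homeoOfEquivCompactToT2
    (f := Equiv.ofBijective (phi P) ⟨phi_injective, hsurj⟩) hcont⟩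

lemma hhom_perfect {P : Set (ℕ → Bool)} (hc : IsClosed P) (hP : Preperfect P) :
    HHomogeneous P := by
  intro U hU hne
  obtain ⟨O, hO, rfl⟩ := isOpen_induced_iff.1 hU.isOpen
  have h1 : IsClosed (Subtype.val '' (Subtype.val ⁻¹' O : Set P)) :=
    hc.isClosedEmbedding_subtypeVal.isClosedMap _ hU.isClosed
  have h2 : Preperfect (Subtype.val '' (Subtype.val ⁻¹' O : Set P)) := by
    rw [Subtype.image_preimage_coe, inter_comm]
    exact inter_comm O P ▸ hP.open_inter hO
  obtain ⟨e⟩ := brouwer h1 h2 (hne.image _)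
  obtain ⟨e'⟩ := brouwer hc hP (let ⟨x, _⟩ := hne; ⟨x.1, x.2⟩)
  exact ⟨((Topology.IsEmbedding.subtypeVal.homeomorphImage _).trans e).trans e'.symm⟩

lemma hhom_singleton (x : ℕ → Bool) : HHomogeneous ({x} : Set (ℕ → Bool)) := by
  intro U _ hne
  have : U = univ := Subsingleton.eq_univ_of_nonempty hne
  subst this
  exact ⟨Homeomorph.Set.univ _⟩

end CantorAux

/-- Every closed subset `F` of the Cantor space `ℕ → Bool` is σ-homogeneous:
it is a countable union of subspaces that are closed in `F` and h-homogeneous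
in the subspace topology. -/
theorem closed_sigmaHomogeneous (F : Set (ℕ → Bool)) (hF : IsClosed F) :
    ∃ f : ℕ → Set (ℕ → Bool),
      (∀ i, f i ⊆ F) ∧
      (∀ i, IsClosed (Subtype.val ⁻¹' f i : Set ↥F)) ∧
      (∀ i, HHomogeneous ↥(f i)) ∧
      F = ⋃ i, f i := by
  obtain ⟨V, D, hV, hD, rfl⟩ := exists_countable_union_perfect_of_isClosed hF
  have hS : (insert D ((fun x => ({x} : Set (ℕ → Bool))) '' V)).Countable :=
    (hV.image _).insert D
  obtain ⟨f, hf⟩ := hS.exists_eq_range (Set.insert_nonempty _ _)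
  have key : ∀ i, f i = D ∨ ∃ x ∈ V, {x} = f i := by
    intro i
    have : f i ∈ Set.range f := ⟨i, rfl⟩
    rw [← hf] at this
    exact this
  refine ⟨f, fun i => ?_, fun i => ?_, fun i => ?_, ?_⟩
  · rcases key i with h | ⟨x, hx, h⟩
    · rw [h]; exact Set.subset_union_right
    · rw [← h]; exact Set.singleton_subset_iff.2 (Or.inl hx)
  · refine IsClosed.preimage continuous_subtype_val ?_
    rcases key i with h | ⟨x, hx, h⟩
    · rw [h]; exact hD.closed
    · rw [← h]; exact isClosed_singleton
  · rcases key i with h | ⟨x, hx, h⟩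
    · rw [h]; exact CantorAux.hhom_perfect hD.closed hD.acc
    · rw [← h]; exact CantorAux.hhom_singleton x
  · rw [← Set.sUnion_range, ← hf, Set.sUnion_insert, Set.sUnion_image, Set.biUnion_of_singleton,
      Set.union_comm]
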